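/- Let $H$ be an $(n+1) \times n$ real upper Hessenberg matrix (i.e., $H_{j,k} = 0$ whenever $j > k+1$) with nonzero subdiagonal entries $H_{k+1,k} \ne 0$, and let $(p_k)$ be the polynomials defined by $p_0(t) = 1$ and $p_{k+1}(t) = \big(t\, p_k(t) - \sum_{j=0}^{k} H_{j,k}\, p_j(t)\big)/H_{k+1,k}$. Let $s_1, \dots, s_M$ be any real numbers and let $W$ be the $M \times (n+1)$ matrix with entries $W_{i,k} = p_k(s_i)$. Then $S W_- = W H$, where $S = \mathrm{diag}(s_1, \dots, s_M)$ and $W_-$ denotes $W$ with its final column deleted; and for any $d \in \mathbb{R}^{n+1}$, the $i$th entry of $W d$ equals $p(s_i)$ where $p = \sum_{k=0}^n d_k\, p_k$. -/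

import Mathlib

/-!
Multiplying the recurrence by `H k.succ k ≠ 0` turns it into the polynomial identity
`X * p k = ∑ j, H j k * p j`, the sum running over the whole `k`-th column of `H` because its
entries below the subdiagonal vanish. Evaluating at `s i` gives the `(i, k)` entry of `S W₋ = W H`.
The formula for `W d` is linearity of evaluation.
-/

/-- The Arnoldi recurrence as a column identity: multiplication by `X` acts on the `p k` through
the columns of `H`. -/
lemma X_mul_eq_sum_column (n : ℕ)
    (H : Matrix (Fin (n + 1)) (Fin n) ℝ)
    (hHess : ∀ (j : Fin (n + 1)) (k : Fin n), (j : ℕ) > (k : ℕ) + 1 → H j k = 0)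
    (hsub : ∀ k : Fin n, H k.succ k ≠ 0)
    (p : Fin (n + 1) → Polynomial ℝ)
    (hprec : ∀ k : Fin n,
        p k.succ = Polynomial.C (H k.succ k)⁻¹ *
          (Polynomial.X * p k.castSucc -
            ∑ j : Fin (n + 1),
              if (j : ℕ) ≤ (k : ℕ) then Polynomial.C (H j k) * p j else 0))
    (k : Fin n) :
    Polynomial.X * p k.castSucc = ∑ j, Polynomial.C (H j k) * p j := by
  have hsplit : ∑ j, Polynomial.C (H j k) * p j =
      (∑ j : Fin (n + 1), if (j : ℕ) ≤ (k : ℕ) then Polynomial.C (H j k) * p j else 0) +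
        Polynomial.C (H k.succ k) * p k.succ := by
    rw [← Fintype.sum_ite_eq' k.succ (fun j => Polynomial.C (H j k) * p j),
      ← Finset.sum_add_distrib]
    refine Finset.sum_congr rfl fun j _ => ?_
    rcases lt_trichotomy (j : ℕ) (k + 1) with h | h | h
    · have hne : j ≠ k.succ := fun e => by simp [e] at h
      simp [hne, Nat.lt_succ_iff.mp h]
    · obtain rfl : j = k.succ := Fin.ext (by simpa using h)
      simp
    · have hne : j ≠ k.succ := fun e => by simp [e] at h
      simp [hne, hHess j k h]
  rw [hsplit, hprec k, ← mul_assoc, ← Polynomial.C_mul, mul_inv_cancel₀ (hsub k),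
    Polynomial.C_1, one_mul, add_sub_cancel]


/-- Evaluating the Arnoldi recurrence polynomials at new points
`s 1, …, s M` gives a matrix `W` with `W i k = p k (s i)` satisfying
`S W₋ = W H` (where `S = diag s` and `W₋` is `W` without its final column),
and `(W d) i = p (s i)` for `p = ∑ k, d k • p k`. -/
theorem arnoldi_evaluation_matrix
    (M n : ℕ)
    (H : Matrix (Fin (n + 1)) (Fin n) ℝ)
    (hHess : ∀ (j : Fin (n + 1)) (k : Fin n), (j : ℕ) > (k : ℕ) + 1 → H j k = 0)
    (hsub : ∀ k : Fin n, H k.succ k ≠ 0)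
    (p : Fin (n + 1) → Polynomial ℝ)
    (hp0 : p 0 = 1)
    (hprec : ∀ k : Fin n,
        p k.succ = Polynomial.C (H k.succ k)⁻¹ *
          (Polynomial.X * p k.castSucc -
            ∑ j : Fin (n + 1),
              if (j : ℕ) ≤ (k : ℕ) then Polynomial.C (H j k) * p j else 0))
    (s : Fin M → ℝ)
    (W : Matrix (Fin M) (Fin (n + 1)) ℝ)
    (hW : ∀ (i : Fin M) (k : Fin (n + 1)), W i k = (p k).eval (s i)) :
    Matrix.diagonal s * W.submatrix id Fin.castSucc = W * H ∧
    (∀ (d : Fin (n + 1) → ℝ) (i : Fin M),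
        W.mulVec d i = (∑ k : Fin (n + 1), Polynomial.C (d k) * p k).eval (s i)) := by
  refine ⟨?_, fun d i => ?_⟩
  · ext i k
    have h := congrArg (Polynomial.eval (s i)) (X_mul_eq_sum_column n H hHess hsub p hprec k)
    rw [Matrix.diagonal_mul, Matrix.mul_apply]
    simpa [hW, Polynomial.eval_finsetSum, mul_comm] using h
  · simp [Matrix.mulVec, dotProduct, hW, Polynomial.eval_finsetSum, mul_comm]
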